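/- (Mixed difference-differential equation for family VI with (p,q,m) = (0,0,1).) Let λ, μ ∈ ℂ and for n ∈ ℕ set F_n(x) = ₀F₂(—; λ+n, 1−μ−n; x) = Σ_{k≥0} x^k/((λ+n)_k·(1−μ−n)_k·k!) ∈ ℂ[[x]]. Assume that for every n ∈ ℕ neither λ+n nor 1−μ−n is a nonpositive integer (so each F_n is well defined), and that for every integer n ≥ 1 the quantities n+λ, n+μ−1 and (2n+λ+μ)(2n+λ+μ−1)(2n+λ+μ−2) are nonzero. Then for every integer n ≥ 1, the identity −F_n'(x) = ((n+μ)/((n+λ)(2n+λ+μ)(2n+λ+μ−1)))·F_{n+1}(x) + (2/((2n+λ+μ)(2n+λ+μ−2)))·F_n(x) + ((n+λ−1)/((n+μ−1)(2n+λ+μ−1)(2n+λ+μ−2)))·F_{n−1}(x) holds in ℂ[[x]], where ' denotes the formal derivative with respect to x. -/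

import Mathlib

noncomputable section

open PowerSeries

/-- Pochhammer symbol `(a)_k = a (a+1) ⋯ (a+k-1)`, with `(a)_0 = 1`. -/
def poch (a : ℂ) : ℕ → ℂ
  | 0 => 1
  | k + 1 => poch a k * (a + k)

/-- `F_n(x) = ₀F₂(—; λ+n, 1−μ−n; x) = Σ_{k≥0} x^k/((λ+n)_k (1−μ−n)_k k!)`. -/
def Fser (lam mu : ℂ) (n : ℕ) : PowerSeries ℂ :=
  PowerSeries.mk fun k =>
    1 / (poch (lam + n) k * poch (1 - mu - n) k * (Nat.factorial k : ℂ))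

theorem poch_shift (a : ℂ) (k : ℕ) : a * poch (a + 1) k = poch a k * (a + k) := by
  induction k with
  | zero => simp [poch]
  | succ k ih =>
    simp only [poch]
    rw [← mul_assoc, ih]
    push_cast
    ring

theorem poch_ne_zero (a : ℂ) (h : ∀ j : ℕ, a + (j : ℂ) ≠ 0) (k : ℕ) : poch a k ≠ 0 := by
  induction k with
  | zero => simp [poch]
  | succ k ih => exact mul_ne_zero ih (h k)

theorem coeff_identity (a b x p q p1 q1 p2 q2 f : ℂ)
    (ha : a ≠ 0) (hb : b ≠ 0) (ha1 : a - 1 ≠ 0) (hb1 : b - 1 ≠ 0)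
    (hA : a + x ≠ 0) (hB : b + x ≠ 0) (hA1 : a - 1 + x ≠ 0) (hB1 : b - 1 + x ≠ 0)
    (hp : p ≠ 0) (hq : q ≠ 0) (hf : f ≠ 0) (hx : x + 1 ≠ 0)
    (h1 : a * p1 = p * (a + x)) (h2 : (b - 1) * q = q1 * (b - 1 + x))
    (h3 : (a - 1) * p = p2 * (a - 1 + x)) (h4 : b * q2 = q * (b + x))
    (s0 : a - b + 1 ≠ 0) (s1 : a - b ≠ 0) (s2 : a - b - 1 ≠ 0) :
    -(1 / (p * (a + x) * (q * (b + x)) * ((x + 1) * f)) * (x + 1)) =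
      (1 - b) / (a * (a - b + 1) * (a - b)) * (1 / (p1 * q1 * f)) +
      2 / ((a - b + 1) * (a - b - 1)) * (1 / (p * q * f)) +
      (a - 1) / (-b * (a - b) * (a - b - 1)) * (1 / (p2 * q2 * f)) := by
  have e1 : p1 = p * (a + x) / a := by rw [eq_div_iff ha, ← h1]; ring
  have e2 : q1 = (b - 1) * q / (b - 1 + x) := by rw [eq_div_iff hB1, h2]
  have e3 : p2 = (a - 1) * p / (a - 1 + x) := by rw [eq_div_iff hA1, h3]
  have e4 : q2 = q * (b + x) / b := by rw [eq_div_iff hb, ← h4]; ring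
  have t1 : (1 - b) / (a * (a - b + 1) * (a - b)) * (1 / (p1 * q1 * f)) =
      -(b - 1 + x) / ((a + x) * (a - b + 1) * (a - b)) * (1 / (p * q * f)) := by
    rw [e1, e2]; field_simp; ring
  have t3 : (a - 1) / (-b * (a - b) * (a - b - 1)) * (1 / (p2 * q2 * f)) =
      -(a - 1 + x) / ((b + x) * (a - b) * (a - b - 1)) * (1 / (p * q * f)) := by
    rw [e3, e4]; field_simp
  rw [t1, t3]
  field_simp
  ring

/-- Mixed difference-differential equation for family VI with `(p,q,m) = (0,0,1)`. -/
theorem mixed_relation_family_VI (lam mu : ℂ)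
    (hlow : ∀ n : ℕ, ∀ j : ℕ, (lam + n) + (j : ℂ) ≠ 0 ∧ (1 - mu - n) + (j : ℂ) ≠ 0)
    (hden : ∀ n : ℕ, 1 ≤ n →
      ((n : ℂ) + lam ≠ 0) ∧ ((n : ℂ) + mu - 1 ≠ 0) ∧
      (2 * (n : ℂ) + lam + mu) * (2 * (n : ℂ) + lam + mu - 1) *
        (2 * (n : ℂ) + lam + mu - 2) ≠ 0) :
    ∀ n : ℕ, 1 ≤ n →
      -(PowerSeries.derivativeFun (Fser lam mu n)) =
        ((((n : ℂ) + mu)) /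
            (((n : ℂ) + lam) * (2 * (n : ℂ) + lam + mu) * (2 * (n : ℂ) + lam + mu - 1))) •
            Fser lam mu (n + 1) +
          ((2 : ℂ) /
            ((2 * (n : ℂ) + lam + mu) * (2 * (n : ℂ) + lam + mu - 2))) •
            Fser lam mu n +
          ((((n : ℂ) + lam - 1)) /
            (((n : ℂ) + mu - 1) * (2 * (n : ℂ) + lam + mu - 1) * (2 * (n : ℂ) + lam + mu - 2))) •
            Fser lam mu (n - 1) := by
  intro n hn
  obtain ⟨m, rfl⟩ : ∃ m, n = m + 1 := ⟨n - 1, by omega⟩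
  obtain ⟨d1, d2, d3⟩ := hden (m + 1) hn
  have s2 := right_ne_zero_of_mul d3
  have s1 := right_ne_zero_of_mul (left_ne_zero_of_mul d3)
  have s0 := left_ne_zero_of_mul (left_ne_zero_of_mul d3)
  have hder : ∀ (f : PowerSeries ℂ) (j : ℕ), PowerSeries.coeff j (PowerSeries.derivativeFun f) =
      PowerSeries.coeff (j + 1) f * (j + 1) := fun f j => PowerSeries.coeff_derivative f j
  ext k
  simp only [map_neg, map_add, PowerSeries.coeff_smul, hder,
    Fser, PowerSeries.coeff_mk, Nat.add_sub_cancel, smul_eq_mul, poch, Nat.factorial_succ]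
  set a : ℂ := lam + ((m + 1 : ℕ) : ℂ) with hadef
  set b : ℂ := 1 - mu - ((m + 1 : ℕ) : ℂ) with hbdef
  have ea : lam + ((m + 1 + 1 : ℕ) : ℂ) = a + 1 := by rw [hadef]; push_cast; ring
  have eb : 1 - mu - ((m + 1 + 1 : ℕ) : ℂ) = b - 1 := by rw [hbdef]; push_cast; ring
  have ea' : lam + (m : ℂ) = a - 1 := by rw [hadef]; push_cast; ring
  have eb' : 1 - mu - (m : ℂ) = b + 1 := by rw [hbdef]; push_cast; ring
  have La := fun j => (hlow (m + 1) j).1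
  have Lb := fun j => (hlow (m + 1) j).2
  have La' := fun j => (hlow m j).1
  have Lb' := fun j => (hlow (m + 1 + 1) j).2
  rw [ea'] at La'
  rw [eb] at Lb'
  rw [← hadef] at La
  rw [← hbdef] at Lb
  have r0 : 2 * ((m + 1 : ℕ) : ℂ) + lam + mu = a - b + 1 := by rw [hadef, hbdef]; ring
  have r1 : a - b + 1 - 1 = a - b := by ring
  have r2 : a - b + 1 - 2 = a - b - 1 := by ring
  have r3 : ((m + 1 : ℕ) : ℂ) + mu = 1 - b := by rw [hbdef]; ring
  have r4 : ((m + 1 : ℕ) : ℂ) + lam = a := by rw [hadef]; ring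
  have r5 : 1 - b - 1 = -b := by ring
  rw [r0] at s0 s1 s2
  rw [r1] at s1
  rw [r2] at s2
  rw [ea, eb, ea', eb', r0, r1, r2, r3, r4, r5]
  have h2 := poch_shift (b - 1) k
  have h3 := poch_shift (a - 1) k
  rw [sub_add_cancel] at h2 h3
  have key := coeff_identity a b k (poch a k) (poch b k) (poch (a + 1) k) (poch (b - 1) k)
    (poch (a - 1) k) (poch (b + 1) k) (Nat.factorial k)
    (by simpa using La 0) (by simpa using Lb 0) (by simpa using La' 0) (by simpa using Lb' 0)
    (La k) (Lb k) (La' k) (Lb' k) (poch_ne_zero a La k) (poch_ne_zero b Lb k)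
    (by exact_mod_cast Nat.factorial_ne_zero k) (by exact_mod_cast Nat.succ_ne_zero k)
    (poch_shift a k) h2 h3 (poch_shift b k) s0 s1 s2
  rw [← key]
  push_cast
  ring
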